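/- There exists a constant C > 0 such that for every R with 0 < R < e^{-1} and every u ∈ H¹(ℝ², ℂ), the convolution K_R ∗ |u|² satisfies the pointwise (essential supremum) bound ‖K_R ∗ |u|²‖_∞ ≤ C √(|log R|) · ‖u‖_{H¹}². -/

import Mathlib

noncomputable section
open MeasureTheory ENNReal
open scoped RealInnerProductSpace

/-- The plane `ℝ²`. -/
abbrev E2 : Type := EuclideanSpace ℝ (Fin 2)

/-- The rotation by 90 degrees: `x^⊥ = (-x₂, x₁)`. -/
def perp (x : E2) : E2 := (WithLp.equiv 2 (Fin 2 → ℝ)).symm ![-(x 1), x 0]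

/-- The Aharonov–Bohm kernel `K_R(x) = x^⊥ / (max R ‖x‖)²` (with `K_R 0 = 0`,
also when `R = 0`, by the junk-value convention `(0 : ℝ)⁻¹ = 0`). -/
def K (R : ℝ) (x : E2) : E2 := ((max R ‖x‖) ^ 2)⁻¹ • perp x

/-- The standard basis of `ℝ²`. -/
def e2 (j : Fin 2) : E2 := EuclideanSpace.single j 1

/-- Componentwise convolution of the vector kernel `K_R` with a scalar density. -/
def convKs (R : ℝ) (ρ : E2 → ℝ) (x : E2) : E2 := ∫ y, ρ y • K R (x - y)

/-- Convolution of the vector kernel `K_R` with a vector field, summed over components. -/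
def convKv (R : ℝ) (F : E2 → E2) (x : E2) : ℝ := ∫ y, ⟪K R (x - y), F y⟫

/-- The current `J[u] = i(u∇ū - ū∇u) = 2 Im(ū ∇u)`, an `ℝ²`-valued function. -/
def Jf (u : E2 → ℂ) (x : E2) : E2 :=
  (WithLp.equiv 2 (Fin 2 → ℝ)).symm fun j =>
    2 * ((starRingEnd ℂ) (u x) * fderiv ℝ u x (e2 j)).im

/-- The `H¹` norm `(‖u‖₂² + ‖∇u‖₂²)^{1/2}` (extended-real valued). -/
def H1 (u : E2 → ℂ) : ℝ≥0∞ :=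
  (eLpNorm u 2 volume ^ 2 + eLpNorm (fun x => fderiv ℝ u x) 2 volume ^ 2) ^ (1 / 2 : ℝ)

/-- The `H²` norm `(‖u‖₂² + ‖∇u‖₂² + ‖∇²u‖₂²)^{1/2}` (extended-real valued). -/
def H2 (u : E2 → ℂ) : ℝ≥0∞ :=
  (eLpNorm u 2 volume ^ 2 + eLpNorm (fun x => fderiv ℝ u x) 2 volume ^ 2
    + eLpNorm (fun x => fderiv ℝ (fderiv ℝ u) x) 2 volume ^ 2) ^ (1 / 2 : ℝ)

open Set Filter Topology in
lemma radial_bound (g g' h : ℝ → ℝ) (hg : ∀ r, HasDerivAt g (g' r) r) (g0 : ∀ r, 0 ≤ g r)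
    (hg' : ∀ r, |g' r| ≤ h r) (hgh : ∀ r, g r ≤ h r) (mh : Measurable h) :
    ∫⁻ r in Ioi (0 : ℝ), ENNReal.ofReal (g r)
      ≤ ∫⁻ r in Ioi (0 : ℝ), ENNReal.ofReal (r * h r) := by
  by_cases hfin : ∫⁻ r in Ioi (0 : ℝ), ENNReal.ofReal (r * h r) = ⊤
  · rw [hfin]; exact le_top
  have gcont : Continuous g := continuous_iff_continuousAt.2 fun r => (hg r).continuousAt
  have mg' : Measurable g' := by
    have : g' = deriv g := by ext r; exact (hg r).deriv.symm
    rw [this]; exact measurable_deriv g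
  have hi : IntegrableOn (fun r => r * h r) (Ioi 0) := by
    refine ⟨(measurable_id.mul mh).aestronglyMeasurable, ?_⟩
    rw [hasFiniteIntegral_iff_ofReal]
    · exact lt_top_iff_ne_top.2 hfin
    · filter_upwards [ae_restrict_mem measurableSet_Ioi] with r hr
      exact mul_nonneg (le_of_lt hr) ((g0 r).trans (hgh r))
  have i1 : IntegrableOn (fun r => r * g' r) (Ioi 0) := by
    refine Integrable.mono' hi (measurable_id.mul mg').aestronglyMeasurable ?_
    filter_upwards [ae_restrict_mem measurableSet_Ioi] with r hr
    have hr : 0 < r := hr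
    rw [Real.norm_eq_abs, abs_mul, abs_of_pos hr]
    exact mul_le_mul_of_nonneg_left (hg' r) hr.le
  have i2 : IntegrableOn (fun r => r * g r) (Ioi 0) := by
    refine Integrable.mono' hi (by fun_prop) ?_
    filter_upwards [ae_restrict_mem measurableSet_Ioi] with r hr
    have hr : 0 < r := hr
    rw [Real.norm_eq_abs, abs_mul, abs_of_pos hr, abs_of_nonneg (g0 r)]
    exact mul_le_mul_of_nonneg_left (hgh r) hr.le
  have i3 : IntegrableOn g (Ioi 0) := by
    rw [← Ioc_union_Ioi_eq_Ioi (zero_le_one (α := ℝ))]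
    refine IntegrableOn.union ?_ ?_
    · exact (gcont.integrableOn_Icc (a := 0) (b := 1)).mono_set Ioc_subset_Icc_self
    · refine Integrable.mono' (i2.mono_set (Ioi_subset_Ioi zero_le_one)) (by fun_prop) ?_
      filter_upwards [ae_restrict_mem measurableSet_Ioi] with r hr
      have hr : 1 < r := hr
      rw [Real.norm_eq_abs, abs_of_nonneg (g0 r)]
      nlinarith [g0 r]
  have hd : ∀ r, HasDerivAt (fun r => r * g r) (g r + r * g' r) r := by
    intro r
    have := (hasDerivAt_id' r).mul (hg r)
    rw [one_mul] at this
    exact this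
  have i4 : IntegrableOn (fun r => g r + r * g' r) (Ioi 0) := i3.add i1
  have ht := tendsto_zero_of_hasDerivAt_of_integrableOn_Ioi (a := 0) (fun r _ => hd r) i4 i2
  have hI := integral_Ioi_of_hasDerivAt_of_tendsto' (a := 0) (fun r _ => hd r) i4 ht
  rw [integral_add i3 i1] at hI
  have hle : -∫ r in Ioi (0:ℝ), r * g' r ≤ ∫ r in Ioi (0:ℝ), r * h r := by
    rw [← integral_neg]
    refine setIntegral_mono_on i1.neg hi measurableSet_Ioi ?_
    intro r hr
    have hr : 0 < r := hr
    have := neg_abs_le (g' r)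
    have := hg' r
    nlinarith
  rw [← ofReal_integral_eq_lintegral_ofReal i3 (ae_of_all _ g0),
    ← ofReal_integral_eq_lintegral_ofReal hi]
  · apply ENNReal.ofReal_le_ofReal
    simp at hI
    linarith
  · filter_upwards [ae_restrict_mem measurableSet_Ioi] with r hr
    exact mul_nonneg (le_of_lt hr) ((g0 r).trans (hgh r))

open Set Metric in
lemma polar_lintegral (F : E2 → ℝ≥0∞) (hF : Measurable F) :
    ∫⁻ z, F z = ∫⁻ v : sphere (0 : E2) 1, (∫⁻ r in Ioi (0 : ℝ), ENNReal.ofReal r * F (r • (v : E2)))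
      ∂((volume : Measure E2).toSphere) := by
  have hmp := (volume : Measure E2).measurePreserving_homeomorphUnitSphereProd
  have hF2 : Measurable (fun p : sphere (0 : E2) 1 × Ioi (0 : ℝ) =>
      F ((p.2 : ℝ) • (p.1 : E2))) := by
    apply hF.comp
    fun_prop
  calc ∫⁻ z, F z = ∫⁻ z : ({(0 : E2)}ᶜ : Set E2), F z ∂((volume : Measure E2).comap Subtype.val) := by
        rw [lintegral_subtype_comap (measurableSet_singleton _).compl F,
          restrict_compl_singleton]
    _ = ∫⁻ p, F ((p.2 : ℝ) • (p.1 : E2)) ∂((volume : Measure E2).toSphere.prod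
          (.volumeIoiPow (Module.finrank ℝ E2 - 1))) := by
        rw [← hmp.lintegral_comp hF2]
        refine lintegral_congr fun z => ?_
        congr 1
        have hz : ‖(z : E2)‖ ≠ 0 := norm_ne_zero_iff.2 z.2
        simp [smul_smul, hz]
    _ = _ := by
        rw [lintegral_prod _ hF2.aemeasurable]
        refine lintegral_congr fun v => ?_
        have h1 : Module.finrank ℝ E2 - 1 = 1 := by simp
        rw [h1, Measure.volumeIoiPow, lintegral_withDensity_eq_lintegral_mul _ (by fun_prop)]
        · simp only [Pi.mul_apply, pow_one]
          rw [lintegral_subtype_comap measurableSet_Ioi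
            (fun r : ℝ => ENNReal.ofReal r * F (r • (v : E2)))]
        · exact hF.comp (by fun_prop)

lemma norm_perp (x : E2) : ‖perp x‖ = ‖x‖ := by
  simp [perp, EuclideanSpace.norm_eq, Fin.sum_univ_two, add_comm]

lemma norm_K_le (R : ℝ) (x : E2) : ‖K R x‖ ≤ ‖x‖⁻¹ := by
  rw [K, norm_smul, norm_perp]
  rcases eq_or_ne x 0 with rfl | hx
  · simp
  have hx : 0 < ‖x‖ := norm_pos_iff.2 hx
  have hm : ‖x‖ ≤ max R ‖x‖ := le_max_right _ _
  have hm0 : 0 < max R ‖x‖ := hx.trans_le hm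
  rw [Real.norm_eq_abs, abs_of_nonneg (by positivity)]
  calc _ ≤ (‖x‖ ^ 2)⁻¹ * ‖x‖ := by gcongr
    _ = _ := by field_simp

lemma hardy (u : E2 → ℂ) (hu : Differentiable ℝ u) (x : E2) :
    ∫⁻ z, ENNReal.ofReal (‖z‖⁻¹ * ‖u (x + z)‖ ^ 2)
      ≤ ∫⁻ z, ENNReal.ofReal (‖u z‖ ^ 2 + ‖fderiv ℝ u z‖ ^ 2) := by
  have mu : Measurable u := hu.continuous.measurable
  have md : Measurable (fun z => fderiv ℝ u z) := measurable_fderiv ℝ u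
  have mh : Measurable (fun z => ‖u z‖ ^ 2 + ‖fderiv ℝ u z‖ ^ 2) := by fun_prop
  rw [← lintegral_add_left_eq_self (fun z => ENNReal.ofReal (‖u z‖ ^ 2 + ‖fderiv ℝ u z‖ ^ 2)) x]
  rw [polar_lintegral _ (by fun_prop), polar_lintegral _ (by fun_prop)]
  refine lintegral_mono fun v => ?_
  have hv : ‖(v : E2)‖ = 1 := by simpa using v.2
  have key := radial_bound (fun r => ‖u (x + r • (v : E2))‖ ^ 2)
    (fun r => 2 * inner ℝ (u (x + r • (v : E2))) (fderiv ℝ u (x + r • (v : E2)) v))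
    (fun r => ‖u (x + r • (v : E2))‖ ^ 2 + ‖fderiv ℝ u (x + r • (v : E2))‖ ^ 2)
    (fun r => by
      have h1 : HasDerivAt (fun r : ℝ => x + r • (v : E2)) (v : E2) r := by
        simpa using ((hasDerivAt_id r).smul_const (v : E2)).const_add x
      exact ((hu _).hasFDerivAt.comp_hasDerivAt r h1).norm_sq)
    (fun r => by positivity)
    (fun r => by
      have h1 := abs_real_inner_le_norm (u (x + r • (v : E2)))
        (fderiv ℝ u (x + r • (v : E2)) v)
      have h2 := (fderiv ℝ u (x + r • (v : E2))).le_opNorm v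
      rw [hv, mul_one] at h2
      rw [abs_mul, abs_two]
      have h3 := mul_le_mul_of_nonneg_left h2 (norm_nonneg (u (x + r • (v : E2))))
      nlinarith [sq_nonneg (‖u (x + r • (v : E2))‖ - ‖fderiv ℝ u (x + r • (v : E2))‖)])
    (fun r => by simp only [le_add_iff_nonneg_right]; positivity)
    (mh.comp (by fun_prop))
  refine (le_of_eq ?_).trans (key.trans (le_of_eq ?_))
  · refine setLIntegral_congr_fun measurableSet_Ioi fun r hr => ?_
    have hr : 0 < r := hr
    beta_reduce
    rw [← ENNReal.ofReal_mul hr.le, norm_smul, hv, mul_one, Real.norm_eq_abs, abs_of_pos hr,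
      ← mul_assoc, mul_inv_cancel₀ hr.ne', one_mul]
  · refine setLIntegral_congr_fun measurableSet_Ioi fun r hr => ?_
    have hr : 0 < r := hr
    beta_reduce
    rw [← ENNReal.ofReal_mul hr.le]

lemma H1_sq (u : E2 → ℂ) (hu : Differentiable ℝ u) :
    H1 u ^ 2 = ∫⁻ z, ENNReal.ofReal (‖u z‖ ^ 2 + ‖fderiv ℝ u z‖ ^ 2) := by
  have mu : Measurable u := hu.continuous.measurable
  have e : ∀ {G : Type} [NormedAddCommGroup G] (f : E2 → G),
      eLpNorm f 2 volume ^ 2 = ∫⁻ z, ENNReal.ofReal (‖f z‖ ^ 2) := by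
    intro G _ f
    have := eLpNorm_nnreal_pow_eq_lintegral (μ := (volume : Measure E2)) (f := f)
      (p := 2) two_ne_zero
    simp only [NNReal.coe_ofNat, ENNReal.rpow_ofNat, ENNReal.coe_ofNat] at this
    rw [this]
    refine lintegral_congr fun z => ?_
    rw [ENNReal.ofReal_pow (norm_nonneg _), ofReal_norm]
  rw [H1, ← ENNReal.rpow_natCast, ← ENNReal.rpow_mul, e, e, ← lintegral_add_left (by fun_prop)]
  simp only [Nat.cast_ofNat, one_div, ne_eq, OfNat.ofNat_ne_zero, not_false_eq_true,
    inv_mul_cancel₀, ENNReal.rpow_one]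
  refine lintegral_congr fun z => ?_
  rw [ENNReal.ofReal_add (by positivity) (by positivity)]

/-- Lemma 2.5: there is `C > 0` such that for all `0 < R < e⁻¹` and `u ∈ H¹(ℝ², ℂ)`,
`‖K_R ∗ |u|²‖_∞ ≤ C √|log R| ‖u‖_{H¹}²`. -/
theorem statement5 :
    ∃ C : ℝ, 0 < C ∧ ∀ R : ℝ, 0 < R → R < Real.exp (-1) →
      ∀ u : E2 → ℂ, Differentiable ℝ u → H1 u < ⊤ →
        eLpNorm (convKs R fun y => ‖u y‖ ^ 2) ⊤ volume
          ≤ ENNReal.ofReal (C * Real.sqrt (-Real.log R)) * H1 u ^ 2 := by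
  refine ⟨1, one_pos, fun R hR hR1 u hu _ => ?_⟩
  have hlog : 1 ≤ Real.sqrt (-Real.log R) := by
    rw [Real.one_le_sqrt]
    have := Real.log_lt_log hR hR1
    rw [Real.log_exp] at this
    linarith
  have h1 : (1 : ℝ≥0∞) ≤ ENNReal.ofReal (1 * Real.sqrt (-Real.log R)) := by
    rw [one_mul, ← ENNReal.ofReal_one]
    exact ENNReal.ofReal_le_ofReal hlog
  refine le_trans ?_ (le_mul_of_one_le_left (zero_le) h1)
  rw [eLpNorm_exponent_top]
  refine eLpNormEssSup_le_of_ae_enorm_bound (ae_of_all _ fun x => ?_)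
  rw [H1_sq u hu]
  refine le_trans ?_ (hardy u hu x)
  rw [convKs]
  refine (enorm_integral_le_lintegral_enorm _).trans ?_
  rw [← lintegral_add_left_eq_self _ x]
  refine lintegral_mono fun z => ?_
  rw [← ofReal_norm]
  apply ENNReal.ofReal_le_ofReal
  rw [norm_smul, mul_comm, Real.norm_eq_abs, abs_of_nonneg (by positivity)]
  gcongr
  have := norm_K_le R (x - (x + z))
  simpa using this
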